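/- There do not exist rational numbers a, b, c with a + b + c = 1 and a·b·c = 1. -/

import Mathlib

/-! Clearing denominators, the claim is that `X + Y + Z = 0` for every integral point of
`E : XYZ = (X + Y + Z)³`. The proof is a descent along the 3-isogenies joining `E` to the Hesse
cubic `E' : r³ + s³ + t³ = rst`. On a primitive point of `E` with `X + Y + Z ≠ 0` the three
coordinates are pairwise coprime with product a cube, hence are cubes `r³`, `s³`, `t³`, and
`(r, s, t)` lies on `E'`. Conversely, on `E'` the tangents at the three flexes on `t = 0` multiply
to `-26 t³`; one of them, `3r + 3s + t`, is rational and the product of the others is a norm from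
`ℤ[ω]`. For a suitable ordering of `r, s, t` the rational factor is divisible by 13, which makes
some `u + vω` with `u`, `v` coprime a cube in `ℤ[ω]`, and its cube root yields a new point of `E`.
Going around once divides `X + Y + Z` by a multiple of 3, so `X + Y + Z` is divisible by every
power of 3.
-/

open NumberField

section Eisenstein

variable {K : Type*} [Field K] {ζ : K} (hζ : IsPrimitiveRoot ζ 3)

local notation "ω" => hζ.toInteger

lemma toInteger_sq_add_toInteger_add_one : ω ^ 2 + ω + 1 = 0 :=
  IsCyclotomicExtension.Rat.Three.eta_sq_add_eta_add_one hζ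

lemma intCast_add_intCast_mul_toInteger_inj [CharZero K] {a b c d : ℤ}
    (h : (a + b * ω : 𝓞 K) = c + d * ω) : a = c ∧ b = d := by
  have hω := toInteger_sq_add_toInteger_add_one hζ
  have hnorm : (a - c) ^ 2 - (a - c) * (b - d) + (b - d) ^ 2 = 0 := by
    have : (((a - c) ^ 2 - (a - c) * (b - d) + (b - d) ^ 2 : ℤ) : 𝓞 K) = 0 := by
      push_cast
      linear_combination (a - c + (b - d) * ω ^ 2 : 𝓞 K) * h -
        ((a - c) * (b - d) + (b - d) ^ 2 * (ω - 1) : 𝓞 K) * hω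
    exact_mod_cast this
  constructor <;> nlinarith [sq_nonneg (a - c - (b - d)), sq_nonneg (a - c), sq_nonneg (b - d)]

lemma exists_eq_intCast_add_intCast_mul_toInteger [NumberField K] [IsCyclotomicExtension {3} ℚ K]
    (z : 𝓞 K) : ∃ x y : ℤ, z = x + y * ω := by
  obtain ⟨f, hdeg, rfl⟩ := hζ.integralPowerBasis.exists_eq_aeval z
  rw [hζ.integralPowerBasis_dim, Nat.totient_prime Nat.prime_three] at hdeg
  obtain ⟨y, x, rfl⟩ := Polynomial.exists_eq_X_add_C_of_natDegree_le_one (Nat.le_of_lt_succ hdeg)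
  exact ⟨x, y, by simp [add_comm]⟩

lemma isCoprime_intCast_add_intCast_mul_toInteger {X Y : ℤ} (hXY : IsCoprime X Y)
    (hN : IsCoprime (X ^ 2 - X * Y + Y ^ 2) 3) :
    IsCoprime (X + Y * ω : 𝓞 K) (X + Y * ω ^ 2) := by
  have hω := toInteger_sq_add_toInteger_add_one hζ
  obtain ⟨a, b, hab⟩ := hXY.intCast (R := 𝓞 K)
  obtain ⟨c, d, hcd⟩ := hN.intCast (R := 𝓞 K)
  push_cast at hcd
  refine ⟨c * (X + Y * ω ^ 2) - d * (ω - ω ^ 2) * (b - a * ω ^ 2),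
    -d * (ω - ω ^ 2) * (a * ω - b), ?_⟩
  linear_combination hcd + 3 * d * hab + (c * (X * Y + Y ^ 2 * (ω - 1)) -
    d * (a * X + b * Y) * (ω ^ 2 - 3 * ω + 3)) * hω

lemma exists_intCast_three_dvd_pow_three_sub [NumberField K] [IsCyclotomicExtension {3} ℚ K]
    (z : 𝓞 K) : ∃ m : ℤ, 3 ∣ z ^ 3 - m := by
  let hζ := IsCyclotomicExtension.zeta_spec 3 ℚ K
  obtain ⟨x, y, rfl⟩ := exists_eq_intCast_add_intCast_mul_toInteger hζ z
  refine ⟨x ^ 3 + y ^ 3, x * y * hζ.toInteger * (x + y * hζ.toInteger), ?_⟩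
  push_cast
  linear_combination (y ^ 3 : 𝓞 K) * hζ.toInteger_cube_eq_one

lemma exists_pow_three_eq_intCast_add_intCast_mul_toInteger [NumberField K]
    [IsCyclotomicExtension {3} ℚ K] {X Y n : ℤ} (hXY : IsCoprime X Y) (h3 : 3 ∣ Y)
    (h : X ^ 2 - X * Y + Y ^ 2 = n ^ 3) : ∃ z : 𝓞 K, z ^ 3 = X + Y * ω := by
  have := IsCyclotomicExtension.Rat.three_pid K
  have hω := toInteger_sq_add_toInteger_add_one hζ
  have hX : IsCoprime X 3 := hXY.of_isCoprime_of_dvd_right h3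
  have hN : IsCoprime (X ^ 2 - X * Y + Y ^ 2) 3 := by
    obtain ⟨Y, rfl⟩ := h3
    rw [show X ^ 2 - X * (3 * Y) + (3 * Y) ^ 2 = X ^ 2 + 3 * (3 * Y ^ 2 - X * Y) by ring]
    exact hX.pow_left.add_mul_left_left _
  have hmul : (X + Y * ω) * (X + Y * ω ^ 2) = (n : 𝓞 K) ^ 3 := by
    rw [← Int.cast_pow, ← h]
    push_cast
    linear_combination (X * Y + Y ^ 2 * (ω - 1) : 𝓞 K) * hω
  obtain ⟨z, u, hu⟩ := exists_associated_pow_of_mul_eq_pow'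
    (isCoprime_intCast_add_intCast_mul_toInteger hζ hXY hN) hmul
  -- Modulo `3`, both `z ^ 3` and `X + Y * ω` are congruent to rational integers, hence so is the
  -- unit `u` relating them, and Kummer's lemma makes it `±1`.
  have hcong : ∃ m : ℤ, (ω - 1) ^ 2 ∣ (↑u⁻¹ - m : 𝓞 K) := by
    obtain ⟨m, v, hv⟩ := exists_intCast_three_dvd_pow_three_sub z
    obtain ⟨a, b, hab⟩ := hX
    obtain ⟨Y, rfl⟩ := h3
    have hab' := congrArg (Int.cast : ℤ → 𝓞 K) hab
    have huu := u.inv_mul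
    push_cast at hab' hu
    have h3 : (ω - 1) ^ 2 ∣ (3 : 𝓞 K) := ⟨-ω ^ 2, by linear_combination (ω ^ 2 - 3 * ω + 3) * hω⟩
    refine ⟨a * m, h3.trans ⟨a * v - a * ↑u⁻¹ * Y * ω + b * ↑u⁻¹, ?_⟩⟩
    push_cast
    linear_combination (a : 𝓞 K) * hv - a * ↑u⁻¹ * hu + a * z ^ 3 * huu - ↑u⁻¹ * hab'
  rcases IsCyclotomicExtension.Rat.Three.eq_one_or_neg_one_of_unit_of_congruent hζ u⁻¹ hcong
    with hu1 | hu1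
  · exact ⟨z, by simpa [inv_eq_one.1 hu1] using hu⟩
  · exact ⟨-z, by simpa [inv_eq_iff_eq_inv.1 hu1, Odd.neg_pow (by decide : Odd 3)] using hu⟩

end Eisenstein

lemma exists_of_sq_sub_mul_add_sq_eq_pow_three {X Y n : ℤ} (hXY : IsCoprime X Y) (h3 : 3 ∣ Y)
    (h : X ^ 2 - X * Y + Y ^ 2 = n ^ 3) :
    ∃ x y : ℤ, X = x ^ 3 - 3 * x * y ^ 2 + y ^ 3 ∧ Y = 3 * (x * y * (x - y)) ∧
      n = x ^ 2 - x * y + y ^ 2 := by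
  let K := CyclotomicField 3 ℚ
  have : IsCyclotomicExtension {3} ℚ K := CyclotomicField.isCyclotomicExtension 3 ℚ
  let hζ := IsCyclotomicExtension.zeta_spec 3 ℚ K
  have hω := toInteger_sq_add_toInteger_add_one hζ
  obtain ⟨z, hz⟩ := exists_pow_three_eq_intCast_add_intCast_mul_toInteger hζ hXY h3 h
  obtain ⟨x, y, rfl⟩ := exists_eq_intCast_add_intCast_mul_toInteger hζ z
  obtain ⟨rfl, rfl⟩ : X = x ^ 3 - 3 * x * y ^ 2 + y ^ 3 ∧ Y = 3 * (x * y * (x - y)) := by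
    refine intCast_add_intCast_mul_toInteger_inj hζ ?_
    push_cast
    linear_combination -hz + (3 * x * y ^ 2 + y ^ 3 * (hζ.toInteger - 1)) * hω
  refine ⟨x, y, rfl, rfl, (Odd.strictMono_pow (by decide : Odd 3)).injective ?_⟩
  linear_combination -h

lemma not_dvd_of_isCoprime_of_dvd {R : Type*} [CommSemiring R] {p a b : R} (hp : Prime p)
    (hab : IsCoprime a b) (ha : p ∣ a) : ¬ p ∣ b :=
  fun hb ↦ hp.not_isUnit (hab.isUnit_of_dvd' ha hb)

lemma isCoprime_of_forall_prime {a b : ℤ} (h : ∀ p, Prime p → p ∣ a → ¬ p ∣ b) :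
    IsCoprime a b :=
  isCoprime_of_prime_dvd (by rintro ⟨rfl, rfl⟩; exact h 2 Int.prime_two (dvd_zero 2) (dvd_zero 2)) h

lemma dvd_of_mul_mul_eq_add_add_pow_three {g X Y Z : ℤ} (h : X * Y * Z = (X + Y + Z) ^ 3)
    (hX : g ∣ X) (hY : g ∣ Y) : g ∣ Z := by
  obtain ⟨x, rfl⟩ := hX
  obtain ⟨y, rfl⟩ := hY
  obtain rfl | hg := eq_or_ne g 0
  · simpa using h.symm
  obtain ⟨e, g, z, he, hgz, rfl, rfl⟩ := Int.exists_gcd_one' (Int.gcd_pos_of_ne_zero_left Z hg)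
  have he0 : (e : ℤ) ^ 3 ≠ 0 := by positivity
  have hcancel : g ^ 2 * (x * y * z) = (g * (x + y) + z) ^ 3 :=
    mul_left_cancel₀ he0 (by linear_combination h)
  have hdvd : g ∣ z ^ 3 :=
    ⟨g * (x * y * z) - (x + y) * ((g * (x + y) + z) ^ 2 + (g * (x + y) + z) * z + z ^ 2),
      by linear_combination -hcancel⟩
  have hunit : IsUnit g :=
    (Int.isCoprime_iff_gcd_eq_one.2 hgz).pow_right.isUnit_of_dvd' dvd_rfl hdvd
  exact mul_dvd_mul_right hunit.dvd _

lemma isCoprime_of_mul_mul_eq_add_add_pow_three {x y z : ℤ} (h : x * y * z = (x + y + z) ^ 3)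
    (hxy : IsCoprime x y) : IsCoprime x z := by
  refine isCoprime_of_forall_prime fun p hp hx hz ↦ not_dvd_of_isCoprime_of_dvd hp hxy hx ?_
  exact dvd_of_mul_mul_eq_add_add_pow_three (by linear_combination h) hx hz

/-- `(r : s : t)` is a rational point of the Hesse cubic `r³ + s³ + t³ = rst`, the curve 3-isogenous
to `XYZ = (X + Y + Z)³` through which the descent passes. Primitivity is encoded as pairwise
coprimality, since a prime dividing two of the coordinates divides the third. -/
structure IsPrimitiveHessePoint (r s t : ℤ) : Prop where
  eq : r ^ 3 + s ^ 3 + t ^ 3 = r * s * t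
  isCoprime_left : IsCoprime r s
  isCoprime_right : IsCoprime s t
  isCoprime_outer : IsCoprime r t

lemma exists_isPrimitiveHessePoint {X Y Z : ℤ} (h : X * Y * Z = (X + Y + Z) ^ 3)
    (h0 : X + Y + Z ≠ 0) :
    ∃ r s t, IsPrimitiveHessePoint r s t ∧ r * s * t ∣ X + Y + Z := by
  have hX : X ≠ 0 := by
    rintro rfl
    exact pow_ne_zero 3 h0 (by linear_combination -h)
  obtain ⟨g, x, y, hg, hxy, rfl, rfl⟩ := Int.exists_gcd_one' (Int.gcd_pos_of_ne_zero_left Y hX)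
  obtain ⟨z, rfl⟩ : (g : ℤ) ∣ Z :=
    dvd_of_mul_mul_eq_add_add_pow_three h (dvd_mul_left _ x) (dvd_mul_left _ y)
  have hg0 : (g : ℤ) ^ 3 ≠ 0 := by positivity
  replace h : x * y * z = (x + y + z) ^ 3 := mul_left_cancel₀ hg0 (by linear_combination h)
  replace hxy := Int.isCoprime_iff_gcd_eq_one.2 hxy
  have hxz : IsCoprime x z := isCoprime_of_mul_mul_eq_add_add_pow_three h hxy
  have hyz : IsCoprime y z :=
    isCoprime_of_mul_mul_eq_add_add_pow_three (by linear_combination h) hxy.symm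
  have hodd : Odd 3 := by decide
  obtain ⟨⟨r, rfl⟩, st, hst⟩ := Int.eq_pow_of_mul_eq_pow_odd (hxy.mul_right hxz) hodd
    (by rw [← mul_assoc, h])
  obtain ⟨⟨s, rfl⟩, ⟨t, rfl⟩⟩ := Int.eq_pow_of_mul_eq_pow_odd hyz hodd hst
  have hsum : r * s * t = r ^ 3 + s ^ 3 + t ^ 3 :=
    hodd.strictMono_pow.injective (by linear_combination h)
  rw [IsCoprime.pow_iff three_pos three_pos] at hxy hxz hyz
  exact ⟨r, s, t, ⟨hsum.symm, hxy, hyz, hxz⟩, g, by linear_combination -g * hsum⟩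

section HesseCubic

variable {r s t : ℤ}

lemma two_dvd_add_add_of_sum_pow_three_eq_mul (h : r ^ 3 + s ^ 3 + t ^ 3 = r * s * t) :
    2 ∣ r + s + t := by
  have hmod : ∀ a b c : ZMod 4, a ^ 3 + b ^ 3 + c ^ 3 = a * b * c → 2 * (a + b + c) = 0 := by
    decide
  have h4 : (4 : ℤ) ∣ 2 * (r + s + t) := by
    refine (ZMod.intCast_zmod_eq_zero_iff_dvd _ 4).1 ?_
    exact_mod_cast hmod r s t (by exact_mod_cast congrArg (Int.cast : ℤ → ZMod 4) h)
  lia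

lemma three_dvd_mul_of_sum_pow_three_eq_mul (h : r ^ 3 + s ^ 3 + t ^ 3 = r * s * t) :
    3 ∣ r * s * t := by
  have hmod : ∀ a b c : ZMod 3, a ^ 3 + b ^ 3 + c ^ 3 = a * b * c → a * b * c = 0 := by decide
  refine (ZMod.intCast_zmod_eq_zero_iff_dvd _ 3).1 ?_
  exact_mod_cast hmod r s t (by exact_mod_cast congrArg (Int.cast : ℤ → ZMod 3) h)

lemma thirteen_dvd_mul_of_sum_pow_three_eq_mul (h : r ^ 3 + s ^ 3 + t ^ 3 = r * s * t) :
    13 ∣ (3 * r + 3 * s + t) * (3 * s + 3 * t + r) * (3 * t + 3 * r + s) :=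
  ⟨3 * (r ^ 2 * s + r ^ 2 * t + s ^ 2 * r + s ^ 2 * t + t ^ 2 * r + t ^ 2 * s) + 7 * (r * s * t),
    by linear_combination 9 * h⟩

lemma three_dvd_add_of_sum_pow_three_eq_mul (h : r ^ 3 + s ^ 3 + t ^ 3 = r * s * t)
    (ht : 3 ∣ t) : 3 ∣ r + s := by
  obtain ⟨t, rfl⟩ := ht
  refine Int.prime_three.dvd_of_dvd_pow (n := 3) ⟨r * s * (r + s + t) - 9 * t ^ 3, ?_⟩
  linear_combination h

lemma twentySix_dvd_of_sum_pow_three_eq_mul (h : r ^ 3 + s ^ 3 + t ^ 3 = r * s * t)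
    (h13 : 13 ∣ 3 * r + 3 * s + t) : 26 ∣ 3 * r + 3 * s + t := by
  have := two_dvd_add_add_of_sum_pow_three_eq_mul h
  lia

end HesseCubic

lemma isCoprime_of_sq_sub_mul_add_sq_dvd_pow {X Y T a b : ℤ} {n : ℕ}
    (hT : IsCoprime T (a * X + b * Y)) (h : X ^ 2 - X * Y + Y ^ 2 ∣ T ^ n) : IsCoprime X Y :=
  isCoprime_of_forall_prime fun p hp hX hY ↦ by
    have hN : p ∣ X ^ 2 - X * Y + Y ^ 2 :=
      dvd_add (dvd_sub (dvd_pow hX two_ne_zero) (hX.mul_right Y)) (dvd_pow hY two_ne_zero)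
    have hpT : p ∣ T := hp.dvd_of_dvd_pow (hN.trans h)
    exact not_dvd_of_isCoprime_of_dvd hp hT hpT (hX.linear_comb hY a b)

lemma isCoprime_of_mul_eq_pow {m N T a b : ℤ} {n : ℕ} (hN : IsCoprime (a * m + b * T) N)
    (h : m * N = T ^ n) : IsCoprime m N :=
  isCoprime_of_forall_prime fun p hp hm ↦ by
    have hpT : p ∣ T := hp.dvd_of_dvd_pow (h ▸ hm.mul_right N)
    exact not_dvd_of_isCoprime_of_dvd hp hN (hm.linear_comb hpT a b)

lemma exists_of_mul_sq_sub_mul_add_sq_eq_pow_three {m T X Y : ℤ} (hXY : IsCoprime X Y)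
    (hm : IsCoprime m (X ^ 2 - X * Y + Y ^ 2)) (h3 : 3 ∣ Y)
    (h : m * (X ^ 2 - X * Y + Y ^ 2) = T ^ 3) :
    ∃ l x y : ℤ, m = l ^ 3 ∧ T = l * (x ^ 2 - x * y + y ^ 2) ∧ Y = 3 * (x * y * (x - y)) := by
  have hodd : Odd 3 := by decide
  obtain ⟨⟨l, rfl⟩, n, hn⟩ := Int.eq_pow_of_mul_eq_pow_odd hm hodd h
  obtain ⟨x, y, -, hY, rfl⟩ := exists_of_sq_sub_mul_add_sq_eq_pow_three hXY h3 hn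
  refine ⟨l, x, y, rfl, hodd.strictMono_pow.injective ?_, hY⟩
  linear_combination l ^ 3 * hn - h

lemma three_dvd_mul_mul_sub_of_not_three_dvd {x y : ℤ} (h : ¬ 3 ∣ x ^ 2 - x * y + y ^ 2) :
    3 ∣ x * y * (x - y) := by
  have hmod : ∀ a b : ZMod 3, a ^ 2 - a * b + b ^ 2 = 0 ∨ a * b * (a - b) = 0 := by decide
  have hxy := hmod x y
  have hnorm := ZMod.intCast_zmod_eq_zero_iff_dvd (x ^ 2 - x * y + y ^ 2) 3
  have hprod := ZMod.intCast_zmod_eq_zero_iff_dvd (x * y * (x - y)) 3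
  push_cast at hnorm hprod
  rw [hnorm, hprod] at hxy
  exact hxy.resolve_left h

namespace IsPrimitiveHessePoint

variable {r s t : ℤ}

lemma rotate (h : IsPrimitiveHessePoint r s t) : IsPrimitiveHessePoint s t r :=
  ⟨by linear_combination h.eq, h.isCoprime_right, h.isCoprime_outer.symm, h.isCoprime_left.symm⟩

lemma three_dvd_of_thirteen_dvd (h : IsPrimitiveHessePoint r s t)
    (h13 : 13 ∣ 3 * r + 3 * s + t) : 3 ∣ t := by
  by_contra ht
  obtain ⟨m, hm⟩ := twentySix_dvd_of_sum_pow_three_eq_mul h.eq h13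
  have ht3 : IsCoprime (-t) 3 := (Int.prime_three.coprime_iff_not_dvd.2 ht).symm.neg_left
  obtain ⟨X, hX⟩ : ∃ X, X = t - 3 * r := ⟨_, rfl⟩
  obtain ⟨Y, hY⟩ : ∃ Y, Y = 3 * (s - r) := ⟨_, rfl⟩
  have hmul : m * (X ^ 2 - X * Y + Y ^ 2) = (-t) ^ 3 := by
    refine mul_left_cancel₀ (by decide : (26 : ℤ) ≠ 0) ?_
    rw [hX, hY]
    linear_combination 27 * h.eq -
      ((t - 3 * r) ^ 2 - (t - 3 * r) * (3 * (s - r)) + (3 * (s - r)) ^ 2) * hm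
  have hXY : IsCoprime X Y := by
    refine isCoprime_of_sq_sub_mul_add_sq_dvd_pow (a := 1) (b := 0) ?_ ⟨m, by rw [← hmul, mul_comm]⟩
    rw [show 1 * X + 0 * Y = -(3 * r) + -t * -1 by linear_combination hX]
    exact (ht3.mul_right h.isCoprime_outer.symm.neg_left).neg_right.add_mul_left_right _
  have hmN : IsCoprime m (X ^ 2 - X * Y + Y ^ 2) := by
    refine isCoprime_of_mul_eq_pow (a := 26) (b := 3) ?_ hmul
    rw [show 26 * m + 3 * -t = Y + X * -2 by linear_combination -hm - hY + 2 * hX,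
      show X ^ 2 - X * Y + Y ^ 2 = 3 * X ^ 2 + (Y + X * -2) * (X + Y) by ring]
    have h3 : IsCoprime (Y + X * -2) 3 :=
      (Int.prime_three.coprime_iff_not_dvd.2 (by lia)).symm
    exact (h3.mul_right (hXY.symm.add_mul_left_left _).pow_right).add_mul_left_right _
  obtain ⟨l, x, y, -, hl, hxy⟩ :=
    exists_of_mul_sq_sub_mul_add_sq_eq_pow_three hXY hmN ⟨s - r, hY⟩ hmul
  have hsr : 3 ∣ s - r := by
    rw [show s - r = x * y * (x - y) by lia]
    exact three_dvd_mul_mul_sub_of_not_three_dvd fun hn ↦ ht (dvd_neg.1 (hl ▸ hn.mul_left l))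
  have hrs : 3 ∣ r * s :=
    (Int.prime_three.dvd_or_dvd (three_dvd_mul_of_sum_pow_three_eq_mul h.eq)).resolve_right ht
  have hr : 3 ∣ r := by
    rcases Int.prime_three.dvd_or_dvd hrs with hr | hs <;> lia
  exact not_dvd_of_isCoprime_of_dvd Int.prime_three h.isCoprime_left hr (by lia)

lemma exists_eq_three_mul_and_eq_nine_mul (h : IsPrimitiveHessePoint r s t)
    (h13 : 13 ∣ 3 * r + 3 * s + t) :
    ∃ k w q, r + s = 3 * k ∧ t = 9 * w ∧ k + w = 78 * q := by
  have ht : 3 ∣ t := h.three_dvd_of_thirteen_dvd h13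
  obtain ⟨k, hk⟩ := three_dvd_add_of_sum_pow_three_eq_mul h.eq ht
  obtain ⟨t, rfl⟩ := ht
  obtain rfl : s = 3 * k - r := by lia
  have h3 : IsCoprime 3 (r * (3 * k - r)) :=
    (h.isCoprime_outer.symm.mul_right h.isCoprime_right.symm).of_mul_left_left
  obtain ⟨w, rfl⟩ : 3 ∣ t := h3.dvd_of_dvd_mul_left
    ⟨3 * k ^ 3 - k * r * (3 * k - r) + 3 * t ^ 3, by linarith [h.eq]⟩
  have hkw : 3 ∣ k + w := h3.dvd_of_dvd_mul_left ⟨k ^ 3 + 27 * w ^ 3, by linarith [h.eq]⟩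
  obtain ⟨m, hm⟩ := twentySix_dvd_of_sum_pow_three_eq_mul h.eq h13
  exact ⟨k, w, (k + w) / 78, hk, by ring, by lia⟩

lemma exists_mul_mul_eq_add_add_pow_three_of_thirteen_dvd (h : IsPrimitiveHessePoint r s t)
    (h13 : 13 ∣ 3 * r + 3 * s + t) :
    ∃ X Y Z : ℤ, X * Y * Z = (X + Y + Z) ^ 3 ∧ 3 * (X + Y + Z) ∣ t := by
  obtain ⟨k, w, q, hk, rfl, hq⟩ := h.exists_eq_three_mul_and_eq_nine_mul h13
  obtain rfl : s = 3 * k - r := by lia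
  -- `X + Yω` is `(t - 3r) + 3(s - r)ω`, the tangent at a flex, divided by `3(1 + 2ω)`.
  obtain ⟨X, hX⟩ : ∃ X, X = 2 * k - r - w := ⟨_, rfl⟩
  obtain ⟨Y, hY⟩ : ∃ Y, Y = k - 2 * w := ⟨_, rfl⟩
  have hmul : q * (X ^ 2 - X * Y + Y ^ 2) = (-w) ^ 3 := by
    rw [hX, hY]
    linarith [h.eq, congrArg (· * (r ^ 2 - 3 * k * r + 3 * k ^ 2 - 3 * w * k + 3 * w ^ 2)) hq]
  have hwr : IsCoprime (-w) r := h.isCoprime_outer.symm.of_mul_left_right.neg_left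
  have hXY : IsCoprime X Y := by
    refine isCoprime_of_sq_sub_mul_add_sq_dvd_pow (a := -1) (b := 2) ?_
      ⟨q, by rw [← hmul, mul_comm]⟩
    rw [show -1 * X + 2 * Y = r + -w * 3 by linear_combination -hX + 2 * hY]
    exact hwr.add_mul_left_right _
  have hqN : IsCoprime q (X ^ 2 - X * Y + Y ^ 2) := by
    refine isCoprime_of_mul_eq_pow (a := 78) (b := 3) ?_ hmul
    rw [show 78 * q + 3 * -w = Y by linear_combination -hq - hY,
      show X ^ 2 - X * Y + Y ^ 2 = X ^ 2 + Y * (Y - X) by ring]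
    exact hXY.symm.pow_right.add_mul_left_right _
  obtain ⟨l, x, y, rfl, hl, hxy⟩ :=
    exists_of_mul_sq_sub_mul_add_sq_eq_pow_three hXY hqN (by lia) hmul
  refine ⟨x + l, l - y, l + y - x, ?_, -(x ^ 2 - x * y + y ^ 2), by linear_combination -9 * hl⟩
  refine mul_left_cancel₀ (by decide : (3 : ℤ) ≠ 0) ?_
  linear_combination hq + 3 * hl - hxy + hY

lemma exists_mul_mul_eq_add_add_pow_three (h : IsPrimitiveHessePoint r s t) :
    ∃ X Y Z : ℤ, X * Y * Z = (X + Y + Z) ^ 3 ∧ 3 * (X + Y + Z) ∣ r * s * t := by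
  have h13 : Prime (13 : ℤ) := by norm_num
  rcases h13.dvd_or_dvd (thirteen_dvd_mul_of_sum_pow_three_eq_mul h.eq) with hdvd | ht
  · rcases h13.dvd_or_dvd hdvd with ht | hr
    · obtain ⟨X, Y, Z, hE, hdvd⟩ := h.exists_mul_mul_eq_add_add_pow_three_of_thirteen_dvd ht
      exact ⟨X, Y, Z, hE, hdvd.mul_left _⟩
    · obtain ⟨X, Y, Z, hE, hdvd⟩ := h.rotate.exists_mul_mul_eq_add_add_pow_three_of_thirteen_dvd hr
      exact ⟨X, Y, Z, hE, (hdvd.mul_right s).mul_right t⟩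
  · obtain ⟨X, Y, Z, hE, hdvd⟩ :=
      h.rotate.rotate.exists_mul_mul_eq_add_add_pow_three_of_thirteen_dvd ht
    exact ⟨X, Y, Z, hE, (hdvd.mul_left r).mul_right t⟩

end IsPrimitiveHessePoint

lemma three_pow_dvd_of_mul_mul_eq_add_add_pow_three (n : ℕ) {X Y Z : ℤ}
    (h : X * Y * Z = (X + Y + Z) ^ 3) : 3 ^ n ∣ X + Y + Z := by
  induction n generalizing X Y Z with
  | zero => simp
  | succ n ih =>
    obtain h0 | h0 := eq_or_ne (X + Y + Z) 0
    · simp [h0]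
    obtain ⟨r, s, t, hrst, hdvd⟩ := exists_isPrimitiveHessePoint h h0
    obtain ⟨X', Y', Z', h', hdvd'⟩ := hrst.exists_mul_mul_eq_add_add_pow_three
    calc (3 : ℤ) ^ (n + 1) = 3 * 3 ^ n := pow_succ' 3 n
      _ ∣ 3 * (X' + Y' + Z') := mul_dvd_mul_left 3 (ih h')
      _ ∣ r * s * t := hdvd'
      _ ∣ X + Y + Z := hdvd

lemma add_add_eq_zero_of_mul_mul_eq_add_add_pow_three {X Y Z : ℤ}
    (h : X * Y * Z = (X + Y + Z) ^ 3) : X + Y + Z = 0 := by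
  by_contra h0
  exact FiniteMultiplicity.not_iff_forall.2
    (fun n ↦ three_pow_dvd_of_mul_mul_eq_add_add_pow_three n h)
    (Int.finiteMultiplicity_iff.2 ⟨by decide, h0⟩)

theorem stmt19 : ¬ ∃ a b c : ℚ, a + b + c = 1 ∧ a * b * c = 1 := by
  rintro ⟨a, b, c, hsum, hmul⟩
  obtain ⟨⟨D, hD⟩, hint⟩ :=
    IsLocalization.exist_integer_multiples_of_finset (nonZeroDivisors ℤ) {a, b, c}
  simp only [Finset.forall_mem_insert, Finset.mem_singleton, forall_eq] at hint
  obtain ⟨⟨X, hX⟩, ⟨Y, hY⟩, ⟨Z, hZ⟩⟩ := hint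
  simp only [algebraMap_int_eq, eq_intCast, zsmul_eq_mul] at hX hY hZ
  have hXYZ : X + Y + Z = D := by
    have : (X + Y + Z : ℚ) = D := by linear_combination hX + hY + hZ + D * hsum
    exact_mod_cast this
  have hE : X * Y * Z = (X + Y + Z) ^ 3 := by
    have : (X * Y * Z : ℚ) = D ^ 3 := by rw [hX, hY, hZ]; linear_combination D ^ 3 * hmul
    rw [hXYZ]
    exact_mod_cast this
  exact nonZeroDivisors.ne_zero hD
    (hXYZ ▸ add_add_eq_zero_of_mul_mul_eq_add_add_pow_three hE)
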